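/- arXiv:1412.4396 — 2 statements merged into one kernel-verified Lean document; each statement's English description precedes it below -/
import Mathlib

section
/- The unitary group U(n) is a maximal compact subgroup of GL(n,ℂ): U(n) is compact, and any subgroup of GL(n,ℂ) that is compact and contains U(n) equals U(n). -/
/-!
The compactness of `U(n)` holds because the matrices with `Mᴴ * M = 1` form a closed set with
entries bounded by `1`, on which `M ↦ (M, Mᴴ)` is continuous into the units.

For maximality, let `H ⊇ U(n)` be a compact subgroup and `g ∈ H`. Diagonalize the positive definite
matrix `gᴴ * g = V D Vᴴ` and put `S = D ^ (1/2)`. Then `W = g V S⁻¹` is unitary, so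
`S = W⁻¹ g V` lies in `H` (`exists_diagonal_mem`). The entries of elements of `H` are bounded, in
particular those of all powers of `S` and of `S⁻¹`; hence each diagonal entry of `S` is `1`
(`diagonal_mem_le_one`), so `D = 1` and `gᴴ * g = 1`.
-/

open Matrix

lemma isCompact_unitary (n : ℕ) :
    IsCompact {g : GL (Fin n) ℂ | (↑g : Matrix (Fin n) (Fin n) ℂ)ᴴ *
      (↑g : Matrix (Fin n) (Fin n) ℂ) = 1} := by
  set K : Set (Matrix (Fin n) (Fin n) ℂ) := {M | Mᴴ * M = 1} with hK
  have hcl : IsClosed K := isClosed_eq (by fun_prop) continuous_const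
  have hbox : IsCompact (Set.pi Set.univ fun _ : Fin n => Set.pi Set.univ fun _ : Fin n =>
      Metric.closedBall (0 : ℂ) 1) :=
    isCompact_univ_pi fun _ => isCompact_univ_pi fun _ => isCompact_closedBall 0 1
  have hKc : IsCompact K := by
    refine hbox.of_isClosed_subset hcl fun M hM i _ j _ => ?_
    rw [mem_closedBall_zero_iff]
    exact entry_norm_bound_of_unitary (mem_unitaryGroup_iff'.2 hM) i j
  have : CompactSpace K := isCompact_iff_compactSpace.1 hKc
  let f : K → GL (Fin n) ℂ := fun M => ⟨M.1, M.1ᴴ, mul_eq_one_comm.1 M.2, M.2⟩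
  have hf : Continuous f := by
    rw [Units.continuous_iff]
    exact ⟨continuous_subtype_val, continuous_subtype_val.matrix_conjTranspose⟩
  convert isCompact_range hf using 1
  ext g
  refine ⟨fun hg => ⟨⟨g, hg⟩, Units.ext rfl⟩, ?_⟩
  rintro ⟨M, rfl⟩
  exact M.2

/-- The invertible diagonal matrix with prescribed nonzero real entries. -/
noncomputable def diagGL {n : ℕ} (s : Fin n → ℝ) (hs : ∀ i, s i ≠ 0) : GL (Fin n) ℂ where
  val := diagonal fun i => (s i : ℂ)
  inv := diagonal fun i => (s i : ℂ)⁻¹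
  val_inv := by simp [diagonal_mul_diagonal, hs]
  inv_val := by simp [diagonal_mul_diagonal, hs]

/-- Powers of an element of a compact subgroup have bounded entries, so a real diagonal entry of a
diagonal element cannot exceed `1`. -/
lemma diagonal_mem_le_one {n : ℕ} {H : Subgroup (GL (Fin n) ℂ)}
    (hH : IsCompact (H : Set (GL (Fin n) ℂ))) {h : GL (Fin n) ℂ} (hh : h ∈ H) {s : Fin n → ℝ}
    (hs : (h : Matrix (Fin n) (Fin n) ℂ) = diagonal fun i => (s i : ℂ)) (i : Fin n) : s i ≤ 1 := by
  have hc : Continuous fun g : GL (Fin n) ℂ => (g : Matrix (Fin n) (Fin n) ℂ) i i :=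
    Units.continuous_val.matrix_elem i i
  obtain ⟨C, hC⟩ := hH.exists_bound_of_continuousOn hc.continuousOn
  by_contra! hlt
  obtain ⟨k, hk⟩ := pow_unbounded_of_one_lt C hlt
  have := hC (h ^ k) (H.pow_mem hh k)
  rw [Units.val_pow_eq_pow_val, hs, diagonal_pow, diagonal_apply_eq, Pi.pow_apply, norm_pow,
    Complex.norm_real, Real.norm_of_nonneg (by linarith)] at this
  linarith

open scoped ComplexOrder in
/-- The diagonal factor in the singular value decomposition of `g` lies in every subgroup that
contains `g` and the unitary matrices. -/
lemma exists_diagonal_mem {n : ℕ} {H : Subgroup (GL (Fin n) ℂ)}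
    (hU : {g : GL (Fin n) ℂ | (↑g : Matrix (Fin n) (Fin n) ℂ)ᴴ *
      (↑g : Matrix (Fin n) (Fin n) ℂ) = 1} ⊆ (H : Set (GL (Fin n) ℂ)))
    {g : GL (Fin n) ℂ} (hg : g ∈ H) :
    ∃ (s : Fin n → ℝ) (hs : ∀ i, 0 < s i) (V : Matrix (Fin n) (Fin n) ℂ),
      V * Vᴴ = 1 ∧ diagGL s (fun i => (hs i).ne') ∈ H ∧
      (g : Matrix (Fin n) (Fin n) ℂ)ᴴ * (g : Matrix (Fin n) (Fin n) ℂ) =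
        V * diagonal (fun i => (s i : ℂ) ^ 2) * Vᴴ := by
  set G : Matrix (Fin n) (Fin n) ℂ := (g : Matrix (Fin n) (Fin n) ℂ) with hG
  have hpd : (Gᴴ * G).PosDef :=
    PosDef.conjTranspose_mul_self G (mulVec_injective_of_isUnit g.isUnit)
  set d := hpd.isHermitian.eigenvalues
  have hd : ∀ i, 0 < d i := hpd.eigenvalues_pos
  let V : Matrix (Fin n) (Fin n) ℂ := hpd.isHermitian.eigenvectorUnitary
  have hVV' : V * Vᴴ = 1 := mem_unitaryGroup_iff.1 hpd.isHermitian.eigenvectorUnitary.2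
  have hV'V : Vᴴ * V = 1 := mul_eq_one_comm.1 hVV'
  have hs : ∀ i, 0 < √(d i) := fun i => Real.sqrt_pos.2 (hd i)
  have hspec : Gᴴ * G = V * diagonal (fun i => ((√(d i) : ℝ) : ℂ) ^ 2) * Vᴴ := by
    have h := hpd.isHermitian.spectral_theorem
    rw [Unitary.conjStarAlgAut_apply] at h
    refine h.trans ?_
    congr 3
    ext i
    simp only [Function.comp_apply, ← Complex.ofReal_pow, Real.sq_sqrt (hd i).le]
    rfl
  refine ⟨fun i => √(d i), hs, V, hVV', ?_, hspec⟩
  let v : GL (Fin n) ℂ := ⟨V, Vᴴ, hVV', hV'V⟩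
  let S := diagGL (fun i => √(d i)) (fun i => (hs i).ne')
  have hv : v ∈ H := hU hV'V
  have hW : g * v * S⁻¹ ∈ H := by
    apply hU
    set T : Matrix (Fin n) (Fin n) ℂ := diagonal fun i => ((√(d i) : ℝ) : ℂ)⁻¹ with hT
    have hTT : Tᴴ = T := by
      rw [hT, diagonal_conjTranspose]
      congr 1
      ext i
      simp
    change (G * V * T)ᴴ * (G * V * T) = 1
    calc (G * V * T)ᴴ * (G * V * T) = T * Vᴴ * (Gᴴ * G) * V * T := by
          simp only [conjTranspose_mul, hTT, Matrix.mul_assoc]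
      _ = T * (Vᴴ * V) * diagonal (fun i => ((√(d i) : ℝ) : ℂ) ^ 2) * (Vᴴ * V) * T := by
          rw [hspec]; simp only [Matrix.mul_assoc]
      _ = 1 := by
          rw [hV'V, hT, Matrix.mul_one, Matrix.mul_one, diagonal_mul_diagonal,
            diagonal_mul_diagonal, ← diagonal_one]
          congr 1
          ext i
          have : ((√(d i) : ℝ) : ℂ) ≠ 0 := Complex.ofReal_ne_zero.2 (hs i).ne'
          field_simp
  have : S = (g * v * S⁻¹)⁻¹ * (g * v) := by group
  change S ∈ H
  rw [this]
  exact H.mul_mem (H.inv_mem hW) (H.mul_mem hg hv)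

/-- The unitary group `U(n)` is a maximal compact subgroup of `GL(n,ℂ)`:
it is compact, and any compact subgroup of `GL(n,ℂ)` containing it equals it. -/
theorem unitary_maximal_compact (n : ℕ) :
    IsCompact {g : GL (Fin n) ℂ | (↑g : Matrix (Fin n) (Fin n) ℂ)ᴴ * (↑g : Matrix (Fin n) (Fin n) ℂ) = 1} ∧
    ∀ H : Subgroup (GL (Fin n) ℂ), IsCompact (H : Set (GL (Fin n) ℂ)) →
      {g : GL (Fin n) ℂ | (↑g : Matrix (Fin n) (Fin n) ℂ)ᴴ * (↑g : Matrix (Fin n) (Fin n) ℂ) = 1} ⊆ (H : Set (GL (Fin n) ℂ)) →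
      (H : Set (GL (Fin n) ℂ)) = {g : GL (Fin n) ℂ | (↑g : Matrix (Fin n) (Fin n) ℂ)ᴴ * (↑g : Matrix (Fin n) (Fin n) ℂ) = 1} := by
  refine ⟨isCompact_unitary n, fun H hH hU => Set.Subset.antisymm (fun g hg => ?_) hU⟩
  obtain ⟨s, hs, V, hV, hS, hspec⟩ := exists_diagonal_mem hU hg
  have hs1 : ∀ i, s i = 1 := fun i => by
    refine le_antisymm (diagonal_mem_le_one hH hS rfl i) ?_
    have h : (s i)⁻¹ ≤ 1 := diagonal_mem_le_one hH (H.inv_mem hS) (s := fun i => (s i)⁻¹)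
      (by simp only [Complex.ofReal_inv]; rfl) i
    exact (inv_le_one₀ (hs i)).1 h
  change _ = _
  rw [hspec]
  simp [hs1, hV]
end

section
/- For a single matrix (r = 1), the minimal vectors of the conjugation action of GL(n,ℂ) on ℂ^{n×n} with the Frobenius norm are exactly the normal matrices: g* g = g g*. -/
/-!
Both directions reduce to diagonal conjugation. Since `‖g X g⁻¹‖²` depends on `g` only through the
positive definite matrix `P = gᴴ g`, diagonalizing `P = U diag(d) Uᴴ` and putting `Y = Uᴴ X U` gives
`‖g X g⁻¹‖² = ∑ᵢⱼ (dᵢ / dⱼ) |Yᵢⱼ|²` (`trace_conj_eq_sum`).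

If `X` is normal then so is `Y`, so its `i`-th row and `i`-th column have equal norms. The bound
`x ≥ 1 + log x` at `x = dᵢ / dⱼ` then yields `‖g X g⁻¹‖² ≥ ‖X‖²`, because the logarithmic terms
cancel. Conversely, if `X` is minimal, diagonalize the moment map `Xᴴ X - X Xᴴ = U diag(h) Uᴴ` and
let `gᴴ g = U diag(exp (t h)) Uᴴ`. The derivative of `‖g X g⁻¹‖²` in `t` at the minimum `t = 0` is
`-∑ᵢ hᵢ²`, so `h = 0` and `X` is normal.
-/

open Matrix

section Aux

variable {n : ℕ}

lemma trace_conj_eq_sum {U g : Matrix (Fin n) (Fin n) ℂ} (X : Matrix (Fin n) (Fin n) ℂ)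
    {d : Fin n → ℝ} (hU : Uᴴ * U = 1) (hd : ∀ i, 0 < d i)
    (h : gᴴ * g = U * diagonal (fun i => (d i : ℂ)) * Uᴴ) :
    ((g * X * g⁻¹)ᴴ * (g * X * g⁻¹)).trace.re =
      ∑ i, ∑ j, d i / d j * Complex.normSq ((Uᴴ * X * U) i j) := by
  have hU' : U * Uᴴ = 1 := mul_eq_one_comm.mp hU
  have hinv : g⁻¹ * (g⁻¹)ᴴ = U * diagonal (fun i => ((d i : ℂ))⁻¹) * Uᴴ := by
    have h1 : g⁻¹ * (g⁻¹)ᴴ = (gᴴ * g)⁻¹ := by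
      rw [Matrix.mul_inv_rev, conjTranspose_nonsing_inv]
    rw [h1, h]
    apply inv_eq_right_inv
    calc U * diagonal (fun i => (d i : ℂ)) * Uᴴ * (U * diagonal (fun i => ((d i : ℂ))⁻¹) * Uᴴ)
        = U * (diagonal (fun i => (d i : ℂ)) * (Uᴴ * U) * diagonal (fun i => ((d i : ℂ))⁻¹)) * Uᴴ
          := by simp only [Matrix.mul_assoc]
      _ = 1 := by
        have : ∀ i, (d i : ℂ) * (d i : ℂ)⁻¹ = 1 := fun i =>
          mul_inv_cancel₀ (by exact_mod_cast (hd i).ne')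
        simp [hU, hU', diagonal_mul_diagonal, this]
  have key : ((g * X * g⁻¹)ᴴ * (g * X * g⁻¹)).trace =
      ((Uᴴ * X * U)ᴴ * (diagonal (fun i => (d i : ℂ)) * (Uᴴ * X * U) *
        diagonal (fun i => ((d i : ℂ))⁻¹))).trace := by
    calc ((g * X * g⁻¹)ᴴ * (g * X * g⁻¹)).trace
        = ((g⁻¹)ᴴ * (Xᴴ * (gᴴ * g) * X * g⁻¹)).trace := by
          simp only [conjTranspose_mul, Matrix.mul_assoc]
      _ = (Xᴴ * (gᴴ * g) * X * (g⁻¹ * (g⁻¹)ᴴ)).trace := by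
          rw [trace_mul_comm]; simp only [Matrix.mul_assoc]
      _ = (Xᴴ * U * diagonal (fun i => (d i : ℂ)) * Uᴴ * X * U *
            diagonal (fun i => ((d i : ℂ))⁻¹) * Uᴴ).trace := by
          rw [h, hinv]; simp only [Matrix.mul_assoc]
      _ = _ := by
          rw [trace_mul_comm]
          simp only [conjTranspose_mul, conjTranspose_conjTranspose, Matrix.mul_assoc]
  rw [key, Finset.sum_comm]
  simp only [trace, diag_apply, Matrix.mul_apply (M := (Uᴴ * X * U)ᴴ), Complex.re_sum,
    mul_diagonal, diagonal_mul, conjTranspose_apply]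
  refine Finset.sum_congr rfl fun j _ => Finset.sum_congr rfl fun i _ => ?_
  generalize (Uᴴ * X * U) i j = z
  have : star z * (↑(d i) * z * (↑(d j))⁻¹) = ((d i / d j * Complex.normSq z : ℝ) : ℂ) := by
    push_cast
    rw [Complex.normSq_eq_conj_mul_self, Complex.star_def]
    ring
  rw [this, Complex.ofReal_re]

lemma trace_eq_sum {U : Matrix (Fin n) (Fin n) ℂ} (X : Matrix (Fin n) (Fin n) ℂ)
    (hU : Uᴴ * U = 1) :
    (Xᴴ * X).trace.re = ∑ i, ∑ j, Complex.normSq ((Uᴴ * X * U) i j) := by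
  have hU' : U * Uᴴ = 1 := mul_eq_one_comm.mp hU
  simpa using trace_conj_eq_sum (g := 1) (d := fun _ => 1) X hU (fun _ => one_pos)
    (by simp [hU'])

/-- The diagonal of `Yᴴ Y - Y Yᴴ` compares the column norms of `Y` with its row norms. -/
lemma commutator_diag (Y : Matrix (Fin n) (Fin n) ℂ) (i : Fin n) :
    (Yᴴ * Y - Y * Yᴴ) i i =
      ((∑ k, Complex.normSq (Y k i) - ∑ k, Complex.normSq (Y i k) : ℝ) : ℂ) := by
  push_cast
  simp [Matrix.mul_apply, ← Complex.mul_conj, mul_comm]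

lemma commutator_conj {U : Matrix (Fin n) (Fin n) ℂ} (X : Matrix (Fin n) (Fin n) ℂ)
    (hU : Uᴴ * U = 1) :
    (Uᴴ * X * U)ᴴ * (Uᴴ * X * U) - (Uᴴ * X * U) * (Uᴴ * X * U)ᴴ =
      Uᴴ * (Xᴴ * X - X * Xᴴ) * U := by
  have hU' : U * Uᴴ = 1 := mul_eq_one_comm.mp hU
  have hc (A : Matrix (Fin n) (Fin n) ℂ) : U * (Uᴴ * A) = A := by
    rw [← Matrix.mul_assoc, hU', Matrix.one_mul]
  simp only [conjTranspose_mul, conjTranspose_conjTranspose, Matrix.mul_assoc, hc,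
    Matrix.mul_sub, Matrix.sub_mul]

/-- The spectral theorem as a factorization through plain matrices. -/
lemma exists_diagonalization {A : Matrix (Fin n) (Fin n) ℂ} (hA : A.IsHermitian) :
    ∃ U : Matrix (Fin n) (Fin n) ℂ, Uᴴ * U = 1 ∧
      A = U * diagonal (fun i => (hA.eigenvalues i : ℂ)) * Uᴴ :=
  ⟨hA.eigenvectorUnitary, Unitary.coe_star_mul_self _, hA.spectral_theorem⟩

/-- Summation by parts: pairing `v i - v j` against a matrix `a` leaves row sums minus
column sums. -/
lemma sum_sub_mul (a : Fin n → Fin n → ℝ) (v : Fin n → ℝ) :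
    ∑ i, ∑ j, (v i - v j) * a i j = ∑ i, v i * (∑ k, a i k - ∑ k, a k i) := by
  simp only [sub_mul, Finset.sum_sub_distrib, mul_sub, Finset.mul_sum]
  congr 1
  exact Finset.sum_comm

open scoped ComplexOrder in
lemma minimal_of_normal {X g : Matrix (Fin n) (Fin n) ℂ} (hX : Xᴴ * X = X * Xᴴ)
    (hg : IsUnit g) :
    (Xᴴ * X).trace.re ≤ ((g * X * g⁻¹)ᴴ * (g * X * g⁻¹)).trace.re := by
  have hP : (gᴴ * g).PosDef := PosDef.conjTranspose_mul_self g (mulVec_injective_of_isUnit hg)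
  obtain ⟨U, hU, hd⟩ := exists_diagonalization hP.1
  have hpos := hP.eigenvalues_pos
  set d := hP.1.eigenvalues
  rw [trace_conj_eq_sum X hU hpos hd, trace_eq_sum X hU]
  set Y := Uᴴ * X * U with hY
  have hrc : ∀ i, ∑ k, Complex.normSq (Y i k) - ∑ k, Complex.normSq (Y k i) = 0 := fun i => by
    have h1 := commutator_diag Y i
    rw [hY, commutator_conj X hU, ← hY, hX, sub_self] at h1
    simp only [Matrix.mul_zero, Matrix.zero_mul, Matrix.zero_apply] at h1
    have h2 := Complex.ofReal_eq_zero.mp h1.symm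
    linarith
  have hlog := sum_sub_mul (fun i j => Complex.normSq (Y i j)) (fun i => Real.log (d i))
  simp only [hrc, mul_zero, Finset.sum_const_zero] at hlog
  calc ∑ i, ∑ j, Complex.normSq (Y i j)
      = ∑ i, ∑ j, (1 + (Real.log (d i) - Real.log (d j))) * Complex.normSq (Y i j) := by
        simp only [add_mul, one_mul, Finset.sum_add_distrib, hlog, add_zero]
    _ ≤ _ := by
        refine Finset.sum_le_sum fun i _ => Finset.sum_le_sum fun j _ =>
          mul_le_mul_of_nonneg_right ?_ (Complex.normSq_nonneg _)
        have := Real.log_le_sub_one_of_pos (div_pos (hpos i) (hpos j))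
        rw [Real.log_div (hpos i).ne' (hpos j).ne'] at this
        linarith

lemma normal_of_minimal {X : Matrix (Fin n) (Fin n) ℂ}
    (hX : ∀ g : Matrix (Fin n) (Fin n) ℂ, IsUnit g →
      (Xᴴ * X).trace.re ≤ ((g * X * g⁻¹)ᴴ * (g * X * g⁻¹)).trace.re) :
    Xᴴ * X = X * Xᴴ := by
  have hH : (Xᴴ * X - X * Xᴴ).IsHermitian :=
    (isHermitian_conjTranspose_mul_self X).sub (isHermitian_mul_conjTranspose_self X)
  obtain ⟨U, hU, hd⟩ := exists_diagonalization hH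
  have hU' : U * Uᴴ = 1 := mul_eq_one_comm.mp hU
  set h := hH.eigenvalues
  set Y := Uᴴ * X * U with hY
  have hrc : ∀ i, ∑ k, Complex.normSq (Y i k) - ∑ k, Complex.normSq (Y k i) = -h i := fun i => by
    have h1 := commutator_diag Y i
    have h3 : Uᴴ * (U * diagonal (fun i => (h i : ℂ)) * Uᴴ) * U =
        diagonal (fun i => (h i : ℂ)) := by
      calc _ = (Uᴴ * U) * diagonal (fun i => (h i : ℂ)) * (Uᴴ * U) := by
            simp only [Matrix.mul_assoc]
        _ = _ := by simp [hU]
    rw [hY, commutator_conj X hU, ← hY, hd, h3, diagonal_apply_eq] at h1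
    have h2 := Complex.ofReal_injective h1
    linarith
  let f : ℝ → ℝ := fun t => ∑ i, ∑ j, Real.exp (t * (h i - h j)) * Complex.normSq (Y i j)
  have hmin : ∀ t, f 0 ≤ f t := fun t => by
    -- A square root of `diag(exp (t h))`, so that `gᴴ g = U diag(exp (t h)) Uᴴ`.
    let D : Matrix (Fin n) (Fin n) ℂ := diagonal fun i => ((Real.exp (t * h i / 2) : ℝ) : ℂ)
    have hD : IsUnit D := by
      rw [isUnit_diagonal, Pi.isUnit_iff]
      intro i
      simp [Complex.exp_ne_zero]
    have hDD : Dᴴ * D = diagonal fun i => ((Real.exp (t * h i) : ℝ) : ℂ) := by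
      simp only [D, diagonal_conjTranspose, diagonal_mul_diagonal]
      congr 1
      ext i
      rw [Pi.star_apply, Complex.star_def, Complex.conj_ofReal, ← Complex.ofReal_mul,
        ← Real.exp_add, add_halves]
    have hg : IsUnit (D * Uᴴ) := hD.mul (IsUnit.of_mul_eq_one U hU)
    have := hX _ hg
    rw [trace_conj_eq_sum X hU (fun i => Real.exp_pos (t * h i)) (by
      rw [← hDD]; simp only [conjTranspose_mul, conjTranspose_conjTranspose, Matrix.mul_assoc]),
      trace_eq_sum X hU] at this
    simpa [f, mul_sub, Real.exp_sub] using this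
  have hderiv : HasDerivAt f (∑ i, ∑ j, (h i - h j) * Complex.normSq (Y i j)) 0 := by
    refine HasDerivAt.fun_sum fun i _ => HasDerivAt.fun_sum fun j _ => ?_
    simpa using
      (((hasDerivAt_id (0 : ℝ)).mul_const (h i - h j)).exp).mul_const (Complex.normSq (Y i j))
  have h0 := IsLocalMin.hasDerivAt_eq_zero (Filter.Eventually.of_forall hmin) hderiv
  have hs := sum_sub_mul (fun i j => Complex.normSq (Y i j)) h
  simp only [hrc] at hs
  rw [h0] at hs
  have hsq : ∑ i, h i * h i = 0 := by
    simpa using hs.symm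
  have hz : ∀ i, h i = 0 := fun i => mul_self_eq_zero.mp
    ((Finset.sum_eq_zero_iff_of_nonneg fun i _ => mul_self_nonneg (h i)).mp hsq i
      (Finset.mem_univ i))
  rw [← sub_eq_zero, hd]
  simp [hz]

end Aux

/-- For a single matrix, the minimal vectors of the conjugation action of `GL(n,ℂ)`
on `ℂ^{n×n}` with the Frobenius norm are exactly the normal matrices. -/
theorem minimal_vector_iff_normal (n : ℕ) (X : Matrix (Fin n) (Fin n) ℂ) :
    (∀ g : Matrix (Fin n) (Fin n) ℂ, IsUnit g →
      (Xᴴ * X).trace.re ≤ ((g * X * g⁻¹)ᴴ * (g * X * g⁻¹)).trace.re) ↔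
      Xᴴ * X = X * Xᴴ :=
  ⟨normal_of_minimal, fun hX _ hg => minimal_of_normal hX hg⟩
end
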